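/- Let f : ℝ² → ℝ be a smooth function with compact support. Then there exist constants C > 0 and ε₀ > 0 such that for all 0 < ε < ε₀, | ∫₀^∞∫₀^∞ f(a,b)·(2πε)^{−1/2}·e^{−(a−b)²/(2ε)} da db − ∫₀^∞ f(c,c) dc + √(ε/(2π))·f(0,0) | ≤ C·ε. In other words, as ε → 0⁺, ∫₀^∞∫₀^∞ f(a,b)·e^{−(a−b)²/(2ε)}/√(2πε) da db = ∫₀^∞ f(c,c) dc − √(ε/(2π))·f(0,0) + O(ε). -/

import Mathlib

open Real MeasureTheory

/-!
Put `g u = ∫_{c > 0} (f (c, c + u) + f (c + u, c)) dc`. Folding the quarter-plane along its diagonal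
turns the smoothed integral into the one-dimensional integral `∫_{u > 0} k u • g u`, for any even
kernel `k`. Since `∂₁f + ∂₂f` is, on the diagonal, the derivative of `c ↦ f (c, c)`, its integral is
`-f (0, 0)`, so `g u = 2 ∫ f (c, c) dc - u f (0, 0) + O(u²)`. The expansion is therefore governed by
the first three moments of `k`, which for the centred Gaussian of variance `ε` are
`∫ k = 1`, `∫_{u > 0} u k = √(ε / (2π))` and `∫ u² k = ε`.
-/

open ProbabilityTheory Set
open scoped NNReal

variable {E : Type*} [NormedAddCommGroup E]

section Moments

lemma norm_integral_smul_sub_moments_le [NormedSpace ℝ E] [CompleteSpace E] {μ : Measure ℝ}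
    {k : ℝ → ℝ} {g : ℝ → E} {α β : E} {C : ℝ} (hk₀ : Integrable k μ)
    (hk₁ : Integrable (fun u ↦ u * k u) μ) (hk₂ : Integrable (fun u ↦ u ^ 2 * k u) μ)
    (hg : Integrable (fun u ↦ k u • g u) μ)
    (hC : ∀ u, ‖g u - α - u • β‖ ≤ C * u ^ 2) :
    ‖∫ u, k u • g u ∂μ - (∫ u, k u ∂μ) • α - (∫ u, u * k u ∂μ) • β‖ ≤
      C * ∫ u, u ^ 2 * |k u| ∂μ := by
  have hα := hk₀.smul_const α
  have hβ := hk₁.smul_const β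
  have hk₂' : Integrable (fun u ↦ u ^ 2 * |k u|) μ := by simpa [abs_mul] using hk₂.abs
  have hremainder : ∫ u, k u • g u ∂μ - (∫ u, k u ∂μ) • α - (∫ u, u * k u ∂μ) • β =
      ∫ u, k u • (g u - α - u • β) ∂μ := by
    rw [← integral_smul_const, ← integral_smul_const, ← integral_sub hg hα,
      ← integral_sub (by exact hg.sub hα) hβ]
    simp only [smul_sub, smul_smul, mul_comm]
  rw [hremainder, ← integral_const_mul]
  refine norm_integral_le_of_norm_le (hk₂'.const_mul C) (.of_forall fun u ↦ ?_)
  calc ‖k u • (g u - α - u • β)‖ = |k u| * ‖g u - α - u • β‖ := norm_smul _ _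
    _ ≤ |k u| * (C * u ^ 2) := by gcongr; exact hC u
    _ = C * (u ^ 2 * |k u|) := by ring

lemma integrable_mul_of_integrable_sq_mul {μ : Measure ℝ} {k : ℝ → ℝ} (hk₀ : Integrable k μ)
    (hk₂ : Integrable (fun u ↦ u ^ 2 * k u) μ) : Integrable (fun u ↦ u * k u) μ := by
  refine (hk₀.norm.add hk₂.norm).mono' (aestronglyMeasurable_id.mul hk₀.1) (.of_forall fun u ↦ ?_)
  have hu : |u| ≤ 1 + u ^ 2 := by nlinarith [sq_nonneg (|u| - 1), sq_abs u]
  calc ‖u * k u‖ = |u| * |k u| := norm_mul _ _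
    _ ≤ (1 + u ^ 2) * |k u| := by gcongr
    _ = ‖k u‖ + ‖u ^ 2 * k u‖ := by simp [add_mul]

lemma integral_eq_two_mul_integral_Ioi_of_even {k : ℝ → ℝ} (hk : k.Even) :
    ∫ u, k u = 2 * ∫ u in Ioi 0, k u := by
  rw [← integral_comp_abs]
  congr with u
  rcases abs_choice u with h | h <;> simp [h, hk u]

end Moments

section Folding

lemma measurePreserving_shear : MeasurePreserving fun p : ℝ × ℝ ↦ (p.1, p.1 + p.2) :=
  measurePreserving_prod_add volume volume

lemma measurePreserving_swap_shear : MeasurePreserving fun p : ℝ × ℝ ↦ (p.1 + p.2, p.1) :=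
  Measure.measurePreserving_swap.comp measurePreserving_shear

lemma measurableEmbedding_shear : MeasurableEmbedding fun p : ℝ × ℝ ↦ (p.1, p.1 + p.2) :=
  (MeasurableEquiv.shearAddRight ℝ).measurableEmbedding

lemma measurableEmbedding_swap_shear : MeasurableEmbedding fun p : ℝ × ℝ ↦ (p.1 + p.2, p.1) :=
  MeasurableEquiv.prodComm.measurableEmbedding.comp measurableEmbedding_shear

lemma shear_preimage_quadrant_inter :
    (fun p : ℝ × ℝ ↦ (p.1, p.1 + p.2)) ⁻¹' (Ioi 0 ×ˢ Ioi 0 ∩ {p | p.1 < p.2}) =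
      Ioi 0 ×ˢ Ioi 0 := by
  ext ⟨c, u⟩
  simp only [mem_preimage, mem_inter_iff, mem_prod, mem_Ioi, mem_ofPred_eq]
  grind

lemma swap_shear_preimage_quadrant_sdiff :
    (fun p : ℝ × ℝ ↦ (p.1 + p.2, p.1)) ⁻¹' (Ioi 0 ×ˢ Ioi 0 \ {p | p.1 < p.2}) =
      Ioi 0 ×ˢ Ici 0 := by
  ext ⟨c, u⟩
  simp only [mem_preimage, mem_sdiff, mem_prod, mem_Ioi, mem_ofPred_eq, mem_Ici]
  grind

lemma quadrant_ae_eq_Ioi_prod_Ici :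
    (Ioi 0 ×ˢ Ioi 0 : Set (ℝ × ℝ)) =ᵐ[volume] Ioi 0 ×ˢ Ici 0 :=
  Measure.set_prod_ae_eq .rfl Ioi_ae_eq_Ici

variable {F : ℝ × ℝ → E}

lemma integrableOn_quadrant_shear (hF : IntegrableOn F (Ioi 0 ×ˢ Ioi 0)) :
    IntegrableOn (fun p : ℝ × ℝ ↦ F (p.1, p.1 + p.2)) (Ioi 0 ×ˢ Ioi 0) := by
  rw [← shear_preimage_quadrant_inter]
  exact (measurePreserving_shear.integrableOn_comp_preimage measurableEmbedding_shear).2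
    (hF.mono_set inter_subset_left)

lemma integrableOn_quadrant_swap_shear (hF : IntegrableOn F (Ioi 0 ×ˢ Ioi 0)) :
    IntegrableOn (fun p : ℝ × ℝ ↦ F (p.1 + p.2, p.1)) (Ioi 0 ×ˢ Ioi 0) := by
  rw [integrableOn_congr_set_ae quadrant_ae_eq_Ioi_prod_Ici, ← swap_shear_preimage_quadrant_sdiff]
  exact (measurePreserving_swap_shear.integrableOn_comp_preimage measurableEmbedding_swap_shear).2
    (hF.mono_set sdiff_subset)

lemma setIntegral_quadrant_eq_setIntegral_fold [NormedSpace ℝ E]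
    (hF : IntegrableOn F (Ioi 0 ×ˢ Ioi 0)) :
    ∫ p in Ioi 0 ×ˢ Ioi 0, F p =
      ∫ p in Ioi 0 ×ˢ Ioi 0, (F (p.1, p.1 + p.2) + F (p.1 + p.2, p.1)) := by
  have hmeas : MeasurableSet {p : ℝ × ℝ | p.1 < p.2} :=
    measurableSet_lt measurable_fst measurable_snd
  have habove : ∫ p in Ioi 0 ×ˢ Ioi 0 ∩ {p | p.1 < p.2}, F p =
      ∫ p in Ioi 0 ×ˢ Ioi 0, F (p.1, p.1 + p.2) := by
    rw [← measurePreserving_shear.setIntegral_preimage_emb measurableEmbedding_shear,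
      shear_preimage_quadrant_inter]
  have hbelow : ∫ p in Ioi 0 ×ˢ Ioi 0 \ {p | p.1 < p.2}, F p =
      ∫ p in Ioi 0 ×ˢ Ioi 0, F (p.1 + p.2, p.1) := by
    rw [← measurePreserving_swap_shear.setIntegral_preimage_emb measurableEmbedding_swap_shear,
      swap_shear_preimage_quadrant_sdiff, setIntegral_congr_set quadrant_ae_eq_Ioi_prod_Ici]
  rw [← integral_inter_add_sdiff hmeas hF, habove, hbelow,
    integral_add (integrableOn_quadrant_shear hF) (integrableOn_quadrant_swap_shear hF)]

end Folding

lemma integrable_comp_of_leftInverse {X Z : Type*} [TopologicalSpace X] [TopologicalSpace Z]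
    [T2Space Z] [MeasurableSpace X] [OpensMeasurableSpace X] {μ : Measure X}
    [IsFiniteMeasureOnCompacts μ] {f : Z → E} {φ : X → Z} {ψ : Z → X} (hf : Continuous f)
    (hsupp : HasCompactSupport f) (hφ : Continuous φ) (hψ : Continuous ψ)
    (h : Function.LeftInverse ψ φ) : Integrable (fun x ↦ f (φ x)) μ :=
  (hf.comp hφ).integrable_of_hasCompactSupport
    (hsupp.comp_isClosedEmbedding (h.isClosedEmbedding hψ hφ))

section OffDiagonal

variable [NormedSpace ℝ E] {f : ℝ × ℝ → E} {k : ℝ → ℝ}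

/-- The integral of `f` over the half-lines issuing from `(0, u)` and `(u, 0)` parallel to the
diagonal. Both are parametrised by a coordinate, not by arc length, so that
`(c, u) ↦ (c, c + u)` and `(c, u) ↦ (c + u, c)` preserve area. -/
noncomputable def offDiagonalIntegral (f : ℝ × ℝ → E) (u : ℝ) : E :=
  ∫ c in Ioi 0, (f (c, c + u) + f (c + u, c))

lemma integrable_kernel_smul (hf : Continuous f) (hsupp : HasCompactSupport f)
    (hk : Integrable k) : Integrable fun p : ℝ × ℝ ↦ k (p.1 - p.2) • f p := by
  let K := Prod.snd '' tsupport f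
  have hK : IsCompact K := hsupp.isCompact.image continuous_snd
  have hcutoff : Integrable (K.indicator (1 : ℝ → ℝ)) :=
    (integrable_indicator_iff hK.measurableSet).2 (integrableOn_const hK.measure_lt_top.ne)
  obtain ⟨M, hM⟩ := hsupp.exists_bound_of_continuous hf
  refine ((hcutoff.convolution_integrand (.mul ℝ ℝ) hk).smul_bdd M hf.aestronglyMeasurable
    (.of_forall hM)).congr (.of_forall fun p ↦ ?_)
  by_cases hp : p ∈ tsupport f
  · have hpK : p.2 ∈ K := mem_image_of_mem Prod.snd hp
    simp [hpK]
  · simp [image_eq_zero_of_notMem_tsupport hp]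

lemma integrableOn_fold_kernel_smul (hf : Continuous f) (hsupp : HasCompactSupport f)
    (hk : Integrable k) (heven : k.Even) :
    IntegrableOn (fun p : ℝ × ℝ ↦ k p.2 • (f (p.1, p.1 + p.2) + f (p.1 + p.2, p.1)))
      (Ioi 0 ×ˢ Ioi 0) := by
  have hF := (integrable_kernel_smul hf hsupp hk).integrableOn (s := Ioi 0 ×ˢ Ioi 0)
  refine ((integrableOn_quadrant_shear hF).add (integrableOn_quadrant_swap_shear hF)).congr
    (.of_forall fun p ↦ ?_)
  simp [heven _]

lemma integrableOn_smul_offDiagonalIntegral (hf : Continuous f) (hsupp : HasCompactSupport f)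
    (hk : Integrable k) (heven : k.Even) :
    IntegrableOn (fun u ↦ k u • offDiagonalIntegral f u) (Ioi 0) := by
  have hfold := integrableOn_fold_kernel_smul hf hsupp hk heven
  rw [IntegrableOn, Measure.volume_eq_prod, ← Measure.prod_restrict] at hfold
  simpa only [IntegrableOn, offDiagonalIntegral, integral_smul] using hfold.integral_prod_right

lemma integral_quadrant_kernel_smul (hf : Continuous f) (hsupp : HasCompactSupport f)
    (hk : Integrable k) (heven : k.Even) :
    ∫ a in Ioi 0, ∫ b in Ioi 0, k (a - b) • f (a, b) =
      ∫ u in Ioi 0, k u • offDiagonalIntegral f u := by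
  have hF := (integrable_kernel_smul hf hsupp hk).integrableOn (s := Ioi 0 ×ˢ Ioi 0)
  have hfold := integrableOn_fold_kernel_smul hf hsupp hk heven
  calc ∫ a in Ioi 0, ∫ b in Ioi 0, k (a - b) • f (a, b)
    _ = ∫ p in Ioi 0 ×ˢ Ioi 0, k (p.1 - p.2) • f p := (setIntegral_prod _ hF).symm
    _ = ∫ p in Ioi 0 ×ˢ Ioi 0, k p.2 • (f (p.1, p.1 + p.2) + f (p.1 + p.2, p.1)) := by
      rw [setIntegral_quadrant_eq_setIntegral_fold hF]
      simp [heven _]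
    _ = ∫ u in Ioi 0, ∫ c in Ioi 0, k u • (f (c, c + u) + f (c + u, c)) := by
      rw [IntegrableOn, Measure.volume_eq_prod, ← Measure.prod_restrict] at hfold
      rw [Measure.volume_eq_prod, ← Measure.prod_restrict, integral_prod_symm _ hfold]
    _ = ∫ u in Ioi 0, k u • offDiagonalIntegral f u := by
      simp only [offDiagonalIntegral, integral_smul]

end OffDiagonal

section Taylor

variable [NormedSpace ℝ E] {f : ℝ × ℝ → E} {L : ℝ≥0}

lemma norm_sub_fderiv_apply_le_of_lipschitzWith {V : Type*} [NormedAddCommGroup V]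
    [NormedSpace ℝ V] {f : V → E} (hf : Differentiable ℝ f)
    (hL : LipschitzWith L (fderiv ℝ f)) (x v : V) :
    ‖f (x + v) - f x - fderiv ℝ f x v‖ ≤ L * ‖v‖ ^ 2 := by
  have hball : ∀ z ∈ Metric.closedBall x ‖v‖, ‖fderiv ℝ f z - fderiv ℝ f x‖ ≤ L * ‖v‖ :=
    fun z hz ↦ (hL.norm_sub_le z x).trans (by gcongr; exact mem_closedBall_iff_norm.1 hz)
  have h := (convex_closedBall x ‖v‖).norm_image_sub_le_of_norm_fderiv_le' (y := x + v)
    (fun z _ ↦ hf z) hball (Metric.mem_closedBall_self (norm_nonneg v)) (by simp)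
  simpa [pow_two, mul_assoc] using h

lemma norm_add_sub_two_smul_sub_fderiv_diag_le (hf : Differentiable ℝ f)
    (hL : LipschitzWith L (fderiv ℝ f)) (c u : ℝ) :
    ‖f (c, c + u) + f (c + u, c) - (2 : ℝ) • f (c, c) - u • fderiv ℝ f (c, c) (1, 1)‖ ≤
      2 * L * u ^ 2 := by
  have hup := norm_sub_fderiv_apply_le_of_lipschitzWith hf hL (c, c) (0, u)
  have hright := norm_sub_fderiv_apply_le_of_lipschitzWith hf hL (c, c) (u, 0)
  have hdiag : u • fderiv ℝ f (c, c) (1, 1) =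
      fderiv ℝ f (c, c) (0, u) + fderiv ℝ f (c, c) (u, 0) := by
    rw [← map_add, ← map_smul]
    simp
  simp only [Prod.mk_add_mk, add_zero, Prod.norm_mk, norm_zero, norm_eq_abs, abs_nonneg,
    sup_of_le_left, sup_of_le_right, sq_abs] at hup hright
  calc _ = ‖(f (c, c + u) - f (c, c) - fderiv ℝ f (c, c) (0, u)) +
        (f (c + u, c) - f (c, c) - fderiv ℝ f (c, c) (u, 0))‖ := by
        rw [hdiag]
        congr 1
        module
    _ ≤ L * u ^ 2 + L * u ^ 2 := norm_add_le_of_le hup hright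
    _ = 2 * L * u ^ 2 := by ring

lemma integral_Ioi_fderiv_diag [CompleteSpace E] (hf : ContDiff ℝ 1 f)
    (hsupp : HasCompactSupport f) (a : ℝ) :
    ∫ c in Ioi a, fderiv ℝ f (c, c) (1, 1) = -f (a, a) := by
  have hderiv (c : ℝ) : deriv (fun c ↦ f (c, c)) c = fderiv ℝ f (c, c) (1, 1) :=
    ((hf.differentiable one_ne_zero (c, c)).hasFDerivAt.comp_hasDerivAt (f := fun x : ℝ ↦ (x, x)) c
      ((hasDerivAt_id c).prodMk (hasDerivAt_id c))).deriv
  have hdiag : HasCompactSupport fun c : ℝ ↦ f (c, c) :=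
    hsupp.comp_isClosedEmbedding (Function.LeftInverse.isClosedEmbedding (f := Prod.fst)
      (fun _ ↦ rfl) continuous_fst (by fun_prop))
  simpa only [hderiv] using hdiag.integral_Ioi_deriv_eq (by fun_prop) a

lemma offDiagonalIntegral_sub_eq_integral_remainder [CompleteSpace E] (hf : Differentiable ℝ f)
    (hf' : Continuous (fderiv ℝ f)) (hsupp : HasCompactSupport f) (u : ℝ) :
    offDiagonalIntegral f u - (2 : ℝ) • (∫ c in Ioi 0, f (c, c)) - u • -f (0, 0) =
      ∫ c in Ioi 0, (f (c, c + u) + f (c + u, c) - (2 : ℝ) • f (c, c) -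
        u • fderiv ℝ f (c, c) (1, 1)) := by
  have hup : Integrable fun c ↦ f (c, c + u) := integrable_comp_of_leftInverse hf.continuous
    hsupp (by fun_prop) continuous_fst fun _ ↦ rfl
  have hright : Integrable fun c ↦ f (c + u, c) := integrable_comp_of_leftInverse hf.continuous
    hsupp (by fun_prop) continuous_snd fun _ ↦ rfl
  have hsum : Integrable fun c ↦ f (c, c + u) + f (c + u, c) := hup.add hright
  have hdiag : Integrable fun c ↦ (2 : ℝ) • f (c, c) :=
    (integrable_comp_of_leftInverse hf.continuous hsupp (φ := fun c : ℝ ↦ (c, c)) (by fun_prop)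
      continuous_fst fun _ ↦ rfl).smul (2 : ℝ)
  have hderiv : Integrable fun c ↦ u • fderiv ℝ f (c, c) (1, 1) :=
    ((integrable_comp_of_leftInverse hf' (hsupp.fderiv ℝ) (φ := fun c : ℝ ↦ (c, c)) (by fun_prop)
      continuous_fst fun _ ↦ rfl).apply_continuousLinearMap (1, 1)).smul u
  rw [offDiagonalIntegral, ← integral_Ioi_fderiv_diag (contDiff_one_iff_fderiv.2 ⟨hf, hf'⟩) hsupp,
    ← integral_smul, ← integral_smul, ← integral_sub hsum.integrableOn hdiag.integrableOn,
    ← integral_sub (by exact (hsum.sub hdiag).integrableOn) hderiv.integrableOn]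

lemma exists_norm_offDiagonalIntegral_sub_le [CompleteSpace E] (hf : Differentiable ℝ f)
    (hL : LipschitzWith L (fderiv ℝ f)) (hsupp : HasCompactSupport f) :
    ∃ C > 0, ∀ u, ‖offDiagonalIntegral f u - (2 : ℝ) • (∫ c in Ioi 0, f (c, c)) - u • -f (0, 0)‖ ≤
      C * u ^ 2 := by
  let K := Prod.fst '' tsupport f ∪ Prod.snd '' tsupport f
  have hK : IsCompact K :=
    (hsupp.isCompact.image continuous_fst).union (hsupp.isCompact.image continuous_snd)
  have hvanish (c u : ℝ) (hc : c ∉ K) :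
      f (c, c + u) + f (c + u, c) - (2 : ℝ) • f (c, c) - u • fderiv ℝ f (c, c) (1, 1) = 0 := by
    have hfst (y : ℝ) : (c, y) ∉ tsupport f := fun h ↦ hc (.inl (mem_image_of_mem Prod.fst h))
    have hsnd (x : ℝ) : (x, c) ∉ tsupport f := fun h ↦ hc (.inr (mem_image_of_mem Prod.snd h))
    have hfderiv : fderiv ℝ f (c, c) = 0 :=
      image_eq_zero_of_notMem_tsupport fun h ↦ hfst c (tsupport_fderiv_subset ℝ h)
    simp [image_eq_zero_of_notMem_tsupport, hfst, hsnd, hfderiv]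
  refine ⟨2 * L * volume.real (Ioi 0 ∩ K) + 1, by positivity, fun u ↦ ?_⟩
  rw [offDiagonalIntegral_sub_eq_integral_remainder hf hL.continuous hsupp,
    setIntegral_eq_of_subset_of_forall_sdiff_eq_zero measurableSet_Ioi inter_subset_left
      fun c hc ↦ hvanish c u fun hcK ↦ hc.2 ⟨hc.1, hcK⟩]
  calc _ ≤ 2 * L * u ^ 2 * volume.real (Ioi 0 ∩ K) := norm_setIntegral_le_of_norm_le_const
        (measure_inter_lt_top_of_right_ne_top hK.measure_lt_top.ne)
        fun c _ ↦ norm_add_sub_two_smul_sub_fderiv_diag_le hf hL c u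
    _ ≤ (2 * L * volume.real (Ioi 0 ∩ K) + 1) * u ^ 2 := by linarith [sq_nonneg u]

end Taylor

lemma exists_norm_integral_quadrant_even_kernel_sub_le [NormedSpace ℝ E] [CompleteSpace E]
    {f : ℝ × ℝ → E} {L : ℝ≥0} (hf : Differentiable ℝ f) (hL : LipschitzWith L (fderiv ℝ f))
    (hsupp : HasCompactSupport f) :
    ∃ C > 0, ∀ k : ℝ → ℝ, k.Even → Integrable k → Integrable (fun u ↦ u ^ 2 * k u) →
      ‖(∫ a in Ioi 0, ∫ b in Ioi 0, k (a - b) • f (a, b)) -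
          (∫ u, k u) • (∫ c in Ioi 0, f (c, c)) + (∫ u in Ioi 0, u * k u) • f (0, 0)‖ ≤
        C * ∫ u, u ^ 2 * |k u| := by
  obtain ⟨C, hC₀, hC⟩ := exists_norm_offDiagonalIntegral_sub_le hf hL hsupp
  refine ⟨C, hC₀, fun k heven hk₀ hk₂ ↦ ?_⟩
  have hk₁ := integrable_mul_of_integrable_sq_mul hk₀ hk₂
  have hmoments := norm_integral_smul_sub_moments_le hk₀.integrableOn hk₁.integrableOn
    hk₂.integrableOn (integrableOn_smul_offDiagonalIntegral hf.continuous hsupp hk₀ heven) hC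
  rw [← integral_quadrant_kernel_smul hf.continuous hsupp hk₀ heven, smul_smul, mul_comm _ 2,
    ← integral_eq_two_mul_integral_Ioi_of_even heven, smul_neg, sub_neg_eq_add] at hmoments
  have hk₂' : Integrable fun u ↦ u ^ 2 * |k u| := by simpa [abs_mul] using hk₂.abs
  exact hmoments.trans (mul_le_mul_of_nonneg_left
    (setIntegral_le_integral hk₂' (.of_forall fun u ↦ by positivity)) hC₀.le)

section GaussianMoments

variable {v : ℝ≥0}

lemma even_gaussianPDFReal_zero (v : ℝ≥0) : (gaussianPDFReal 0 v).Even := fun u ↦ by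
  simp [gaussianPDFReal]

lemma integrable_sq_mul_gaussianPDFReal (hv : v ≠ 0) :
    Integrable fun u ↦ u ^ 2 * gaussianPDFReal 0 v u := by
  have h : Integrable (fun u : ℝ ↦ u ^ 2) (gaussianReal 0 v) :=
    (memLp_id_gaussianReal 2).integrable_sq
  rw [gaussianReal_of_var_ne_zero 0 hv, integrable_withDensity_iff_integrable_smul'
    (measurable_gaussianPDF 0 v) (.of_forall fun _ ↦ gaussianPDF_lt_top)] at h
  simpa only [toReal_gaussianPDF, smul_eq_mul, mul_comm] using h

lemma integral_sq_mul_gaussianPDFReal (hv : v ≠ 0) :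
    ∫ u, u ^ 2 * gaussianPDFReal 0 v u = v := by
  have h := variance_of_integral_eq_zero (μ := gaussianReal 0 v) aemeasurable_id
    integral_id_gaussianReal
  rw [variance_id_gaussianReal, integral_gaussianReal_eq_integral_smul hv] at h
  simpa only [smul_eq_mul, id, mul_comm] using h.symm

lemma integral_Ioi_mul_exp_neg_mul_sq {b : ℝ} (hb : 0 < b) :
    ∫ u in Ioi 0, u * rexp (-b * u ^ 2) = (2 * b)⁻¹ := by
  have h := integral_rpow_mul_exp_neg_mul_rpow (p := 2) (q := 1) two_pos (by norm_num) hb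
  norm_num [rpow_neg_one] at h
  simpa [mul_comm] using h

lemma gaussianPDFReal_zero_eq_mul_exp (v : ℝ≥0) (u : ℝ) :
    gaussianPDFReal 0 v u = (√(2 * π * v))⁻¹ * rexp (-(2 * v : ℝ)⁻¹ * u ^ 2) := by
  simp only [gaussianPDFReal, sub_zero, neg_mul, mul_neg, div_eq_inv_mul]

lemma gaussianPDFReal_zero_eq_rpow_mul_exp (v : ℝ≥0) (u : ℝ) :
    gaussianPDFReal 0 v u = (2 * π * v) ^ (-(1 : ℝ) / 2) * rexp (-u ^ 2 / (2 * v)) := by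
  rw [gaussianPDFReal, sub_zero, sqrt_eq_rpow, ← rpow_neg (by positivity),
    neg_div 2 (1 : ℝ)]

lemma integral_Ioi_mul_gaussianPDFReal (hv : v ≠ 0) :
    ∫ u in Ioi 0, u * gaussianPDFReal 0 v u = √(v / (2 * π)) := by
  have hv' : (0 : ℝ) < v := by positivity
  calc ∫ u in Ioi 0, u * gaussianPDFReal 0 v u
    _ = (√(2 * π * v))⁻¹ * ∫ u in Ioi 0, u * rexp (-(2 * v : ℝ)⁻¹ * u ^ 2) := by
      rw [← integral_const_mul]
      congr with u
      rw [gaussianPDFReal_zero_eq_mul_exp, mul_left_comm]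
    _ = (√(2 * π * v))⁻¹ * v := by
      rw [integral_Ioi_mul_exp_neg_mul_sq (by positivity)]
      field_simp
    _ = √(v / (2 * π)) := by
      rw [inv_mul_eq_iff_eq_mul₀ (by positivity), ← sqrt_mul (by positivity),
        show 2 * π * v * (v / (2 * π)) = (v : ℝ) ^ 2 by field_simp, sqrt_sq hv'.le]

end GaussianMoments

theorem gaussian_smoothing_quarter_plane_asymptotics_general [NormedSpace ℝ E] [CompleteSpace E]
    {f : ℝ × ℝ → E} {L : ℝ≥0} (hf : Differentiable ℝ f) (hL : LipschitzWith L (fderiv ℝ f))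
    (hsupp : HasCompactSupport f) :
    ∃ C > (0 : ℝ), ∀ ε : ℝ, 0 < ε →
      ‖(∫ a in Ioi (0 : ℝ), ∫ b in Ioi (0 : ℝ),
            ((2 * π * ε) ^ (-(1 : ℝ) / 2) * rexp (-(a - b) ^ 2 / (2 * ε))) • f (a, b)) -
          (∫ c in Ioi (0 : ℝ), f (c, c)) + √(ε / (2 * π)) • f (0, 0)‖ ≤ C * ε := by
  obtain ⟨C, hC₀, hC⟩ := exists_norm_integral_quadrant_even_kernel_sub_le hf hL hsupp
  refine ⟨C, hC₀, fun ε hε ↦ ?_⟩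
  lift ε to ℝ≥0 using hε.le
  have hv : ε ≠ 0 := by exact_mod_cast hε.ne'
  have h := hC (gaussianPDFReal 0 ε) (even_gaussianPDFReal_zero ε) (integrable_gaussianPDFReal 0 ε)
    (integrable_sq_mul_gaussianPDFReal hv)
  simp only [abs_of_nonneg (gaussianPDFReal_nonneg _ _ _), integral_gaussianPDFReal_eq_one 0 hv,
    integral_Ioi_mul_gaussianPDFReal hv, integral_sq_mul_gaussianPDFReal hv, one_smul] at h
  simpa only [gaussianPDFReal_zero_eq_rpow_mul_exp] using h

/-- Gaussian-smoothing asymptotics on the quarter-plane: for a smooth compactly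
supported `f : ℝ² → ℝ`, as `ε → 0⁺`,
`∫₀^∞∫₀^∞ f(a,b)·(2πε)^{−1/2}·e^{−(a−b)²/(2ε)} da db
  = ∫₀^∞ f(c,c) dc − √(ε/(2π))·f(0,0) + O(ε)`. -/
theorem gaussian_smoothing_quarter_plane_asymptotics
    (f : ℝ × ℝ → ℝ) (hf : ContDiff ℝ (⊤ : ℕ∞) f) (hsupp : HasCompactSupport f) :
    ∃ C > (0 : ℝ), ∃ ε₀ > (0 : ℝ), ∀ ε : ℝ, 0 < ε → ε < ε₀ →
      |(∫ a in Set.Ioi (0 : ℝ), ∫ b in Set.Ioi (0 : ℝ),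
            f (a, b) * (2 * π * ε) ^ (-(1 : ℝ) / 2) * Real.exp (-(a - b) ^ 2 / (2 * ε))) -
          (∫ c in Set.Ioi (0 : ℝ), f (c, c)) +
          Real.sqrt (ε / (2 * π)) * f (0, 0)| ≤ C * ε := by
  obtain ⟨L, hL⟩ := ContDiff.lipschitzWith_of_hasCompactSupport (hsupp.fderiv ℝ)
    (hf.fderiv_right (m := 1) (by norm_cast)) one_ne_zero
  obtain ⟨C, hC₀, hC⟩ := gaussian_smoothing_quarter_plane_asymptotics_general
    (hf.differentiable (by simp)) hL hsupp
  exact ⟨C, hC₀, 1, one_pos, fun ε hε _ ↦ by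
    simpa only [smul_eq_mul, mul_comm, mul_left_comm, mul_assoc, norm_eq_abs] using hC ε hε⟩
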